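/- arXiv:2206.09629 — 8 statements merged into one kernel-verified Lean document; each statement's English description precedes it below -/
import Mathlib

section
/- Let X be a set and R : X × X → X × X a bijection satisfying the set-theoretic Yang–Baxter equation, and let n ≥ 2. For each pair of distinct indices i, j ∈ {1, …, n} let R_{ij} : Xⁿ → Xⁿ be the bijection applying R to the coordinates in positions (i, j) (in that order) and the identity elsewhere. Then the assignment λ_{ij} ↦ R_{ij} defines a group homomorphism φₙ^R : VPₙ → Sym(Xⁿ); equivalently, the permutations R_{ij} satisfy R_{ij} ∘ R_{kl} = R_{kl} ∘ R_{ij} whenever i, j, k, l are pairwise distinct, and R_{ki} ∘ R_{kj} ∘ R_{ij} = R_{ij} ∘ R_{kj} ∘ R_{ki} for pairwise distinct i, j, k. -/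
/-- Lift of a map on the factors (1,2) of a triple product. -/
def lift12 {X Y Z : Type*} (T : X × Y → X × Y) : X × Y × Z → X × Y × Z :=
  fun (x, y, z) => ((T (x, y)).1, (T (x, y)).2, z)

/-- Lift of a map on the factors (1,3) of a triple product. -/
def lift13 {X Y Z : Type*} (T : X × Z → X × Z) : X × Y × Z → X × Y × Z :=
  fun (x, y, z) => ((T (x, z)).1, y, (T (x, z)).2)

/-- Lift of a map on the factors (2,3) of a triple product. -/
def lift23 {X Y Z : Type*} (T : Y × Z → Y × Z) : X × Y × Z → X × Y × Z :=
  fun (x, y, z) => (x, (T (y, z)).1, (T (y, z)).2)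

/-- `R` satisfies the set-theoretic Yang–Baxter equation. -/
def IsYB {X : Type*} (R : X × X → X × X) : Prop :=
  lift12 (X := X) (Y := X) (Z := X) R ∘ lift13 R ∘ lift23 R =
    lift23 (X := X) (Y := X) (Z := X) R ∘ lift13 R ∘ lift12 R

/-- `act R i j` applies `R` to the coordinates in positions `(i, j)` (in that order)
and the identity to all other coordinates of `Xⁿ`. -/
def act {X : Type*} {n : ℕ} (R : X × X → X × X) (i j : Fin n) (f : Fin n → X) :
    Fin n → X :=
  Function.update (Function.update f i (R (f i, f j)).1) j (R (f i, f j)).2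

/-- If `R : X × X → X × X` is a bijection satisfying the set-theoretic Yang–Baxter
equation and `n ≥ 2`, then the maps `R_{ij} : Xⁿ → Xⁿ` satisfy the defining relations
of the virtual pure braid group `VPₙ`:
`R_{ij} ∘ R_{kl} = R_{kl} ∘ R_{ij}` for pairwise distinct `i, j, k, l`, and
`R_{ki} ∘ R_{kj} ∘ R_{ij} = R_{ij} ∘ R_{kj} ∘ R_{ki}` for pairwise distinct `i, j, k`;
hence `λ_{ij} ↦ R_{ij}` defines a group homomorphism `VPₙ → Sym(Xⁿ)`. -/
theorem vpn_representation {X : Type*} (n : ℕ) (hn : 2 ≤ n) (R : X × X → X × X)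
    (hbij : Function.Bijective R) (hYB : IsYB R) :
    (∀ i j k l : Fin n, i ≠ j → i ≠ k → i ≠ l → j ≠ k → j ≠ l → k ≠ l →
      act R i j ∘ act R k l = act R k l ∘ act R i j) ∧
    (∀ i j k : Fin n, i ≠ j → i ≠ k → j ≠ k →
      act R k i ∘ act R k j ∘ act R i j = act R i j ∘ act R k j ∘ act R k i) := by
  constructor
  · intro i j k l hij hik hil hjk hjl hkl
    funext f m
    simp only [Function.comp_apply, act, Function.update_apply]
    grind
  · intro i j k hij hik hjk
    funext f m
    have h := congrFun hYB (f k, f i, f j)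
    simp only [Function.comp_apply, lift12, lift13, lift23, Prod.mk.injEq] at h
    obtain ⟨h₁, h₂, h₃⟩ := h
    simp only [Function.comp_apply, act, Function.update_apply, hij, hik, hjk, hij.symm,
      hik.symm, hjk.symm, if_true, if_false]
    split_ifs <;> simp_all
end

section
/- Under the extension hypotheses on B, C, R^B, R^C, R, identify (B × C)² with B × C × B × C, with positions numbered 1, …, 4 (B in odd positions, C in even positions), and define 𝓡 : (B × C)² → (B × C)² by 𝓡 = R₄₁ ∘ R^B₁₃ ∘ R^C₂₄ ∘ R₂₃⁻¹. Then (B × C, 𝓡) is a Yang–Baxter set, i.e. 𝓡 satisfies the set-theoretic Yang–Baxter equation: 𝓡₁₂ ∘ 𝓡₁₃ ∘ 𝓡₂₃ = 𝓡₂₃ ∘ 𝓡₁₃ ∘ 𝓡₁₂ as maps on (B × C)³. -/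
/-- The 6-fold product `B × C × B × C × B × C`, positions numbered 1,…,6,
`B` in odd positions and `C` in even positions. -/
abbrev T6 (B C : Type*) := B × C × B × C × B × C

section Lifts

variable {B C : Type*}

/-- Apply `T` to the (B,B) coordinates in positions (1,3). -/
def eBB13 (T : B × B → B × B) : T6 B C → T6 B C :=
  fun (b1, c2, b3, c4, b5, c6) => ((T (b1, b3)).1, c2, (T (b1, b3)).2, c4, b5, c6)

/-- Apply `T` to the (B,B) coordinates in positions (1,5). -/
def eBB15 (T : B × B → B × B) : T6 B C → T6 B C :=
  fun (b1, c2, b3, c4, b5, c6) => ((T (b1, b5)).1, c2, b3, c4, (T (b1, b5)).2, c6)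

/-- Apply `T` to the (B,B) coordinates in positions (3,5). -/
def eBB35 (T : B × B → B × B) : T6 B C → T6 B C :=
  fun (b1, c2, b3, c4, b5, c6) => (b1, c2, (T (b3, b5)).1, c4, (T (b3, b5)).2, c6)

/-- Apply `T` to the (C,C) coordinates in positions (2,4). -/
def eCC24 (T : C × C → C × C) : T6 B C → T6 B C :=
  fun (b1, c2, b3, c4, b5, c6) => (b1, (T (c2, c4)).1, b3, (T (c2, c4)).2, b5, c6)

/-- Apply `T` to the (C,C) coordinates in positions (2,6). -/
def eCC26 (T : C × C → C × C) : T6 B C → T6 B C :=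
  fun (b1, c2, b3, c4, b5, c6) => (b1, (T (c2, c6)).1, b3, c4, b5, (T (c2, c6)).2)

/-- Apply `T` to the (C,C) coordinates in positions (4,6). -/
def eCC46 (T : C × C → C × C) : T6 B C → T6 B C :=
  fun (b1, c2, b3, c4, b5, c6) => (b1, c2, b3, (T (c4, c6)).1, b5, (T (c4, c6)).2)

/-- Apply `T` to the (C,B) coordinates in positions (2,3). -/
def eCB23 (T : C × B → C × B) : T6 B C → T6 B C :=
  fun (b1, c2, b3, c4, b5, c6) => (b1, (T (c2, b3)).1, (T (c2, b3)).2, c4, b5, c6)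

/-- Apply `T` to the (C,B) coordinates in positions (2,5). -/
def eCB25 (T : C × B → C × B) : T6 B C → T6 B C :=
  fun (b1, c2, b3, c4, b5, c6) => (b1, (T (c2, b5)).1, b3, c4, (T (c2, b5)).2, c6)

/-- Apply `T` to the (C,B) coordinates in positions (4,1). -/
def eCB41 (T : C × B → C × B) : T6 B C → T6 B C :=
  fun (b1, c2, b3, c4, b5, c6) => ((T (c4, b1)).2, c2, b3, (T (c4, b1)).1, b5, c6)

/-- Apply `T` to the (C,B) coordinates in positions (4,5). -/
def eCB45 (T : C × B → C × B) : T6 B C → T6 B C :=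
  fun (b1, c2, b3, c4, b5, c6) => (b1, c2, b3, (T (c4, b5)).1, (T (c4, b5)).2, c6)

/-- Apply `T` to the (C,B) coordinates in positions (6,1). -/
def eCB61 (T : C × B → C × B) : T6 B C → T6 B C :=
  fun (b1, c2, b3, c4, b5, c6) => ((T (c6, b1)).2, c2, b3, c4, b5, (T (c6, b1)).1)

/-- Apply `T` to the (C,B) coordinates in positions (6,3). -/
def eCB63 (T : C × B → C × B) : T6 B C → T6 B C :=
  fun (b1, c2, b3, c4, b5, c6) => (b1, c2, (T (c6, b3)).2, c4, b5, (T (c6, b3)).1)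

end Lifts

/-- The 4-fold product `B × C × B × C`, identified with `(B × C)²`,
positions numbered 1,…,4, `B` in odd positions and `C` in even positions. -/
abbrev T4 (B C : Type*) := B × C × B × C

section Lifts4

variable {B C : Type*}

/-- Apply `T : C × B → C × B` to the coordinates in positions (4,1) of `T4`. -/
def f41 (T : C × B → C × B) : T4 B C → T4 B C :=
  fun (b1, c2, b3, c4) => ((T (c4, b1)).2, c2, b3, (T (c4, b1)).1)

/-- Apply `T : B × B → B × B` to the coordinates in positions (1,3) of `T4`. -/
def fBB13 (T : B × B → B × B) : T4 B C → T4 B C :=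
  fun (b1, c2, b3, c4) => ((T (b1, b3)).1, c2, (T (b1, b3)).2, c4)

/-- Apply `T : C × C → C × C` to the coordinates in positions (2,4) of `T4`. -/
def fCC24 (T : C × C → C × C) : T4 B C → T4 B C :=
  fun (b1, c2, b3, c4) => (b1, (T (c2, c4)).1, b3, (T (c2, c4)).2)

/-- Apply `T : C × B → C × B` to the coordinates in positions (2,3) of `T4`. -/
def f23 (T : C × B → C × B) : T4 B C → T4 B C :=
  fun (b1, c2, b3, c4) => (b1, (T (c2, b3)).1, (T (c2, b3)).2, c4)

/-- Lift of a map on `(B × C)² = T4` to the pairs (1,2) of `(B × C)³ = T6`. -/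
def pair12 (F : T4 B C → T4 B C) : T6 B C → T6 B C :=
  fun (b1, c2, b3, c4, b5, c6) =>
    ((F (b1, c2, b3, c4)).1, (F (b1, c2, b3, c4)).2.1, (F (b1, c2, b3, c4)).2.2.1,
      (F (b1, c2, b3, c4)).2.2.2, b5, c6)

/-- Lift of a map on `(B × C)² = T4` to the pairs (1,3) of `(B × C)³ = T6`. -/
def pair13 (F : T4 B C → T4 B C) : T6 B C → T6 B C :=
  fun (b1, c2, b3, c4, b5, c6) =>
    ((F (b1, c2, b5, c6)).1, (F (b1, c2, b5, c6)).2.1, b3, c4,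
      (F (b1, c2, b5, c6)).2.2.1, (F (b1, c2, b5, c6)).2.2.2)

/-- Lift of a map on `(B × C)² = T4` to the pairs (2,3) of `(B × C)³ = T6`. -/
def pair23 (F : T4 B C → T4 B C) : T6 B C → T6 B C :=
  fun (b1, c2, b3, c4, b5, c6) =>
    (b1, c2, (F (b3, c4, b5, c6)).1, (F (b3, c4, b5, c6)).2.1,
      (F (b3, c4, b5, c6)).2.2.1, (F (b3, c4, b5, c6)).2.2.2)

end Lifts4

/-- Compatibility of `R : C × B → C × B` with a map `RB` on `B × B`. -/
def BraidsB {B C : Type*} (RB : B × B → B × B) (R : C × B → C × B) : Prop :=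
  lift23 (X := C) RB ∘ lift12 (Z := B) R ∘ lift13 (Y := B) R =
    lift13 (Y := B) R ∘ lift12 (Z := B) R ∘ lift23 (X := C) RB

/-- Compatibility of `R : C × B → C × B` with a map `RC` on `C × C`. -/
def BraidsC {B C : Type*} (RC : C × C → C × C) (R : C × B → C × B) : Prop :=
  lift12 (Z := B) RC ∘ lift23 (X := C) R ∘ lift13 (Y := C) R =
    lift13 (Y := C) R ∘ lift23 (X := C) R ∘ lift12 (Z := B) RC

section Cancel

variable {B C : Type*} (R : C × B ≃ C × B) (x : T6 B C)

theorem eCB23_symm_apply : eCB23 R.symm (eCB23 R x) = x := by simp [eCB23]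

theorem eCB23_apply_symm : eCB23 R (eCB23 R.symm x) = x := by simp [eCB23]

theorem eCB25_symm_apply : eCB25 R.symm (eCB25 R x) = x := by simp [eCB25]

theorem eCB25_apply_symm : eCB25 R (eCB25 R.symm x) = x := by simp [eCB25]

theorem eCB45_symm_apply : eCB45 R.symm (eCB45 R x) = x := by simp [eCB45]

theorem eCB45_apply_symm : eCB45 R (eCB45 R.symm x) = x := by simp [eCB45]

end Cancel

section Relations

variable {B C : Type*} {RB : B × B → B × B} {RC : C × C → C × C} {R : C × B ≃ C × B}

theorem mixed_B_235 (h : BraidsB RB R) (x : T6 B C) :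
    eBB35 RB (eCB23 R (eCB25 R x)) = eCB25 R (eCB23 R (eBB35 RB x)) := by
  obtain ⟨b1, c2, b3, c4, b5, c6⟩ := x
  have h' := congrFun h (c2, b3, b5)
  simp only [Function.comp_apply, lift12, lift13, lift23, Prod.mk.injEq] at h'
  simp [eBB35, eCB23, eCB25, h']

theorem mixed_B_613 (h : BraidsB RB R) (x : T6 B C) :
    eBB13 RB (eCB61 R (eCB63 R x)) = eCB63 R (eCB61 R (eBB13 RB x)) := by
  obtain ⟨b1, c2, b3, c4, b5, c6⟩ := x
  have h' := congrFun h (c6, b1, b3)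
  simp only [Function.comp_apply, lift12, lift13, lift23, Prod.mk.injEq] at h'
  simp [eBB13, eCB61, eCB63, h']

theorem mixed_B_415 (h : BraidsB RB R) (x : T6 B C) :
    eBB15 RB (eCB41 R (eCB45 R x)) = eCB45 R (eCB41 R (eBB15 RB x)) := by
  obtain ⟨b1, c2, b3, c4, b5, c6⟩ := x
  have h' := congrFun h (c4, b1, b5)
  simp only [Function.comp_apply, lift12, lift13, lift23, Prod.mk.injEq] at h'
  simp [eBB15, eCB41, eCB45, h']

theorem mixed_C_263 (h : BraidsC RC R) (x : T6 B C) :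
    eCC26 RC (eCB63 R (eCB23 R x)) = eCB23 R (eCB63 R (eCC26 RC x)) := by
  obtain ⟨b1, c2, b3, c4, b5, c6⟩ := x
  have h' := congrFun h (c2, c6, b3)
  simp only [Function.comp_apply, lift12, lift13, lift23, Prod.mk.injEq] at h'
  simp [eCC26, eCB63, eCB23, h']

theorem mixed_C_245 (h : BraidsC RC R) (x : T6 B C) :
    eCC24 RC (eCB45 R (eCB25 R x)) = eCB25 R (eCB45 R (eCC24 RC x)) := by
  obtain ⟨b1, c2, b3, c4, b5, c6⟩ := x
  have h' := congrFun h (c2, c4, b5)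
  simp only [Function.comp_apply, lift12, lift13, lift23, Prod.mk.injEq] at h'
  simp [eCC24, eCB45, eCB25, h']

theorem mixed_C_461 (h : BraidsC RC R) (x : T6 B C) :
    eCC46 RC (eCB61 R (eCB41 R x)) = eCB41 R (eCB61 R (eCC46 RC x)) := by
  obtain ⟨b1, c2, b3, c4, b5, c6⟩ := x
  have h' := congrFun h (c4, c6, b1)
  simp only [Function.comp_apply, lift12, lift13, lift23, Prod.mk.injEq] at h'
  simp [eCC46, eCB61, eCB41, h']

theorem yb_B_135 (h : IsYB RB) (x : T6 B C) :
    eBB13 RB (eBB15 RB (eBB35 RB x)) = eBB35 RB (eBB15 RB (eBB13 RB x)) := by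
  obtain ⟨b1, c2, b3, c4, b5, c6⟩ := x
  have h' := congrFun h (b1, b3, b5)
  simp only [Function.comp_apply, lift12, lift13, lift23, Prod.mk.injEq] at h'
  simp [eBB13, eBB15, eBB35, h']

theorem yb_C_246 (h : IsYB RC) (x : T6 B C) :
    eCC24 RC (eCC26 RC (eCC46 RC x)) = eCC46 RC (eCC26 RC (eCC24 RC x)) := by
  obtain ⟨b1, c2, b3, c4, b5, c6⟩ := x
  have h' := congrFun h (c2, c4, c6)
  simp only [Function.comp_apply, lift12, lift13, lift23, Prod.mk.injEq] at h'
  simp [eCC24, eCC26, eCC46, h']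

theorem mixed_B_235_symm (h : BraidsB RB R) (x : T6 B C) :
    eCB23 R.symm (eCB25 R.symm (eBB35 RB x)) = eBB35 RB (eCB25 R.symm (eCB23 R.symm x)) := by
  obtain ⟨y, rfl⟩ : ∃ y, eCB23 R (eCB25 R y) = x :=
    ⟨eCB25 R.symm (eCB23 R.symm x), by rw [eCB25_apply_symm, eCB23_apply_symm]⟩
  simp only [mixed_B_235 h, eCB23_symm_apply, eCB25_symm_apply]

theorem mixed_C_245_symm (h : BraidsC RC R) (x : T6 B C) :
    eCB45 R.symm (eCB25 R.symm (eCC24 RC x)) = eCC24 RC (eCB25 R.symm (eCB45 R.symm x)) := by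
  obtain ⟨y, rfl⟩ : ∃ y, eCB45 R (eCB25 R y) = x :=
    ⟨eCB25 R.symm (eCB45 R.symm x), by rw [eCB25_apply_symm, eCB45_apply_symm]⟩
  simp only [mixed_C_245 h, eCB45_symm_apply, eCB25_symm_apply]

theorem mixed_B_415_symm (h : BraidsB RB R) (x : T6 B C) :
    eCB45 R.symm (eBB15 RB (eCB41 R x)) = eCB41 R (eBB15 RB (eCB45 R.symm x)) := by
  obtain ⟨y, rfl⟩ : ∃ y, eCB45 R y = x := ⟨eCB45 R.symm x, eCB45_apply_symm R x⟩
  simp only [mixed_B_415 h, eCB45_symm_apply]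

theorem mixed_C_263_symm (h : BraidsC RC R) (x : T6 B C) :
    eCB23 R.symm (eCC26 RC (eCB63 R x)) = eCB63 R (eCC26 RC (eCB23 R.symm x)) := by
  obtain ⟨y, rfl⟩ : ∃ y, eCB23 R y = x := ⟨eCB23 R.symm x, eCB23_apply_symm R x⟩
  simp only [mixed_C_263 h, eCB23_symm_apply]

end Relations

/-- Theorem: under the extension hypotheses on `B, C, R^B, R^C, R`, the map
`𝓡 = R₄₁ ∘ R^B₁₃ ∘ R^C₂₄ ∘ R₂₃⁻¹` on `(B × C)² = B × C × B × C` satisfies the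
set-theoretic Yang–Baxter equation, i.e. `(B × C, 𝓡)` is a Yang–Baxter set. -/
theorem extension_YB {B C : Type*} (RB : B × B → B × B) (RC : C × C → C × C)
    (hB : IsYB RB) (hC : IsYB RC) (R : C × B ≃ C × B)
    (hRB : lift23 (X := C) RB ∘ lift12 (Z := B) ⇑R ∘ lift13 (Y := B) ⇑R =
      lift13 (Y := B) ⇑R ∘ lift12 (Z := B) ⇑R ∘ lift23 (X := C) RB)
    (hRC : lift12 (Z := B) RC ∘ lift23 (X := C) ⇑R ∘ lift13 (Y := C) ⇑R =
      lift13 (Y := C) ⇑R ∘ lift23 (X := C) ⇑R ∘ lift12 (Z := B) RC) :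
    pair12 (f41 ⇑R ∘ fBB13 RB ∘ fCC24 RC ∘ f23 ⇑R.symm) ∘
        pair13 (f41 ⇑R ∘ fBB13 RB ∘ fCC24 RC ∘ f23 ⇑R.symm) ∘
        pair23 (f41 ⇑R ∘ fBB13 RB ∘ fCC24 RC ∘ f23 ⇑R.symm) =
      pair23 (f41 ⇑R ∘ fBB13 RB ∘ fCC24 RC ∘ f23 ⇑R.symm) ∘
        pair13 (f41 ⇑R ∘ fBB13 RB ∘ fCC24 RC ∘ f23 ⇑R.symm) ∘
        pair12 (f41 ⇑R ∘ fBB13 RB ∘ fCC24 RC ∘ f23 ⇑R.symm) := by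
  funext x
  calc
    _ = eCB41 R (eBB13 RB (eCC24 RC (eCB23 R.symm (eCB61 R (eBB15 RB (eCC26 RC (eCB25 R.symm
        (eCB63 R (eBB35 RB (eCC46 RC (eCB45 R.symm x))))))))))) := rfl
    _ = eCB41 R (eBB13 RB (eCC24 RC (eCB61 R (eBB15 RB (eCB23 R.symm (eCC26 RC (eCB63 R (eCB25
        R.symm (eBB35 RB (eCC46 RC (eCB45 R.symm x))))))))))) := rfl
    _ = eCB41 R (eBB13 RB (eCC24 RC (eCB61 R (eBB15 RB (eCB63 R (eCC26 RC (eCB23 R.symm (eCB25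
        R.symm (eBB35 RB (eCC46 RC (eCB45 R.symm x))))))))))) := by
      rw [mixed_C_263_symm hRC]
    _ = eCB41 R (eBB13 RB (eCC24 RC (eCB61 R (eBB15 RB (eCB63 R (eCC26 RC (eBB35 RB (eCB25
        R.symm (eCB23 R.symm (eCC46 RC (eCB45 R.symm x))))))))))) := by
      rw [mixed_B_235_symm hRB]
    _ = eCB41 R (eBB13 RB (eCB61 R (eCB63 R (eBB15 RB (eBB35 RB (eCC24 RC (eCC26 RC (eCC46 RC
        (eCB25 R.symm (eCB23 R.symm (eCB45 R.symm x))))))))))) := rfl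
    _ = eCB41 R (eCB63 R (eCB61 R (eBB13 RB (eBB15 RB (eBB35 RB (eCC24 RC (eCC26 RC (eCC46 RC
        (eCB25 R.symm (eCB23 R.symm (eCB45 R.symm x))))))))))) := by
      rw [mixed_B_613 hRB]
    _ = eCB41 R (eCB63 R (eCB61 R (eBB35 RB (eBB15 RB (eBB13 RB (eCC46 RC (eCC26 RC (eCC24 RC
        (eCB25 R.symm (eCB23 R.symm (eCB45 R.symm x))))))))))) := by
      rw [yb_B_135 hB, yb_C_246 hC]
    _ = eCB63 R (eBB35 RB (eCB41 R (eCB61 R (eCC46 RC (eBB15 RB (eCC26 RC (eBB13 RB (eCC24 RC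
        (eCB25 R.symm (eCB45 R.symm (eCB23 R.symm x))))))))))) := rfl
    _ = eCB63 R (eBB35 RB (eCC46 RC (eCB61 R (eCB41 R (eBB15 RB (eCC26 RC (eBB13 RB (eCB45
        R.symm (eCB25 R.symm (eCC24 RC (eCB23 R.symm x))))))))))) := by
      rw [mixed_C_461 hRC, mixed_C_245_symm hRC]
    _ = eCB63 R (eBB35 RB (eCC46 RC (eCB61 R (eCC26 RC (eCB41 R (eBB15 RB (eCB45 R.symm (eCB25
        R.symm (eBB13 RB (eCC24 RC (eCB23 R.symm x))))))))))) := rfl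
    _ = eCB63 R (eBB35 RB (eCC46 RC (eCB61 R (eCC26 RC (eCB45 R.symm (eBB15 RB (eCB41 R (eCB25
        R.symm (eBB13 RB (eCC24 RC (eCB23 R.symm x))))))))))) := by
      rw [mixed_B_415_symm hRB]
    _ = _ := rfl
end

section
/- (Set-theoretic Drinfeld twist.) Let X be a set, let T : X × X → X × X be a bijection satisfying the braid equation, let F : X × X → X × X be a bijection, and let Φ, Ψ be bijections of X × X × X such that F₁₂ ∘ Ψ = F₂₃ ∘ Φ, Φ ∘ T₂₃ = T₂₃ ∘ Φ, and Ψ ∘ T₁₂ = T₁₂ ∘ Ψ. Then the twisted maps R₁₂ := F₁₂ ∘ T₁₂ ∘ F₁₂⁻¹ and R₂₃ := F₂₃ ∘ T₂₃ ∘ F₂₃⁻¹ satisfy the braid relation R₁₂ ∘ R₂₃ ∘ R₁₂ = R₂₃ ∘ R₁₂ ∘ R₂₃ on X × X × X. -/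
/-- `S` satisfies the braid equation. -/
def IsBraid {X : Type*} (S : X × X → X × X) : Prop :=
  lift12 (X := X) (Y := X) (Z := X) S ∘ lift23 S ∘ lift12 S =
    lift23 (X := X) (Y := X) (Z := X) S ∘ lift12 S ∘ lift23 S

/-- A map `g ∘ f` intertwines `t` with the conjugate `g ∘ t ∘ g'`, if `g'` is a left inverse of `g`
and `f` commutes with `t`. -/
theorem semiconj_conj {A : Type*} {f g g' t : A → A}
    (hg : Function.LeftInverse g' g) (hf : Function.Commute f t) :
    Function.Semiconj (g ∘ f) t (g ∘ t ∘ g') := fun x => by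
  simp only [Function.comp_apply, hg (f x), hf.eq x]

/-- The braid relation passes along a surjection intertwining two pairs of maps. -/
theorem braid_of_semiconj {A B : Type*} {G : A → B} {s t : A → A} {s' t' : B → B}
    (hG : Function.Surjective G) (hs : Function.Semiconj G s s') (ht : Function.Semiconj G t t')
    (h : s ∘ t ∘ s = t ∘ s ∘ t) : s' ∘ t' ∘ s' = t' ∘ s' ∘ t' := by
  apply hG.injective_comp_right
  change (s' ∘ t' ∘ s') ∘ G = (t' ∘ s' ∘ t') ∘ G
  rw [← (hs.comp_right (ht.comp_right hs)).comp_eq, ← (ht.comp_right (hs.comp_right ht)).comp_eq, h]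

theorem lift12_leftInverse {X Y Z : Type*} (F : (X × Y) ≃ (X × Y)) :
    Function.LeftInverse (lift12 (Z := Z) ⇑F.symm) (lift12 ⇑F) := fun _ => by
  simp [lift12]

theorem lift23_leftInverse {X Y Z : Type*} (F : (Y × Z) ≃ (Y × Z)) :
    Function.LeftInverse (lift23 (X := X) ⇑F.symm) (lift23 ⇑F) := fun _ => by
  simp [lift23]

theorem lift12_surjective {X Y Z : Type*} {F : X × Y → X × Y} (hF : Function.Surjective F) :
    Function.Surjective (lift12 (Z := Z) F) := by
  rintro ⟨x, y, z⟩
  obtain ⟨⟨a, b⟩, h⟩ := hF (x, y)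
  exact ⟨(a, b, z), by simp [lift12, h]⟩

/-- Set-theoretic Drinfeld twist: if `T` is a bijective solution of the braid equation,
`F` is a bijection of `X × X`, and `Φ, Ψ` are bijections of `X × X × X` such that
`F₁₂ ∘ Ψ = F₂₃ ∘ Φ`, `Φ ∘ T₂₃ = T₂₃ ∘ Φ` and `Ψ ∘ T₁₂ = T₁₂ ∘ Ψ`, then the twisted maps
`R₁₂ = F₁₂ ∘ T₁₂ ∘ F₁₂⁻¹` and `R₂₃ = F₂₃ ∘ T₂₃ ∘ F₂₃⁻¹` satisfy the braid relation. -/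
theorem drinfeld_twist_set {X : Type*} (T : X × X → X × X)
    (hTbij : Function.Bijective T) (hT : IsBraid T)
    (F : (X × X) ≃ (X × X)) (Φ Ψ : X × X × X → X × X × X)
    (hΦbij : Function.Bijective Φ) (hΨbij : Function.Bijective Ψ)
    (h1 : lift12 (X := X) (Y := X) (Z := X) ⇑F ∘ Ψ = lift23 (X := X) (Y := X) (Z := X) ⇑F ∘ Φ)
    (h2 : Φ ∘ lift23 (X := X) (Y := X) (Z := X) T = lift23 (X := X) (Y := X) (Z := X) T ∘ Φ)
    (h3 : Ψ ∘ lift12 (X := X) (Y := X) (Z := X) T = lift12 (X := X) (Y := X) (Z := X) T ∘ Ψ) :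
    (lift12 (X := X) (Y := X) (Z := X) ⇑F ∘ lift12 T ∘ lift12 ⇑F.symm) ∘
        (lift23 (X := X) (Y := X) (Z := X) ⇑F ∘ lift23 T ∘ lift23 ⇑F.symm) ∘
        (lift12 (X := X) (Y := X) (Z := X) ⇑F ∘ lift12 T ∘ lift12 ⇑F.symm) =
      (lift23 (X := X) (Y := X) (Z := X) ⇑F ∘ lift23 T ∘ lift23 ⇑F.symm) ∘
        (lift12 (X := X) (Y := X) (Z := X) ⇑F ∘ lift12 T ∘ lift12 ⇑F.symm) ∘
        (lift23 (X := X) (Y := X) (Z := X) ⇑F ∘ lift23 T ∘ lift23 ⇑F.symm) := by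
  have hR12 := semiconj_conj (lift12_leftInverse (Z := X) F) (Function.semiconj_iff_comp_eq.2 h3)
  have hR23 := semiconj_conj (lift23_leftInverse (X := X) F) (Function.semiconj_iff_comp_eq.2 h2)
  rw [← h1] at hR23
  have hG : Function.Surjective (lift12 (Z := X) ⇑F ∘ Ψ) :=
    (lift12_surjective F.surjective).comp hΨbij.surjective
  exact braid_of_semiconj hG hR12 hR23 hT
end

section
/- Under the extension hypotheses on B, C, R^B, R^C, R, with R^B and R^C bijections, let P denote the flip (x, y) ↦ (y, x), set S^B := P ∘ R^B, S^C := P ∘ R^C, and identify (B × C)³ with B × C × B × C × B × C (positions 1, …, 6, B in odd positions, C in even positions). Then the maps 𝓢₁₂ := R₂₃∘S^B₁₃∘S^C₂₄∘R₂₃⁻¹ and 𝓢₂₃ := R₄₅∘S^B₃₅∘S^C₄₆∘R₄₅⁻¹ satisfy the braid relation 𝓢₁₂ ∘ 𝓢₂₃ ∘ 𝓢₁₂ = 𝓢₂₃ ∘ 𝓢₁₂ ∘ 𝓢₂₃; that is, the map 𝓢 := R₂₃∘S^B₁₃∘S^C₂₄∘R₂₃⁻¹ on (B × C)² is a set-theoretic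 solution of the braid equation on B × C. -/
section Twist

variable {B C : Type*}

/-- `𝓢₁₂ = R₂₃ ∘ S^B₁₃ ∘ S^C₂₄ ∘ R₂₃⁻¹` where `S^B = P ∘ R^B`, `S^C = P ∘ R^C`. -/
def calS12 (RB : B × B → B × B) (RC : C × C → C × C) (R : C × B ≃ C × B) :
    T6 B C → T6 B C :=
  eCB23 ⇑R ∘ eBB13 (Prod.swap ∘ RB) ∘ eCC24 (Prod.swap ∘ RC) ∘ eCB23 ⇑R.symm

/-- `𝓢₂₃ = R₄₅ ∘ S^B₃₅ ∘ S^C₄₆ ∘ R₄₅⁻¹`. -/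
def calS23 (RB : B × B → B × B) (RC : C × C → C × C) (R : C × B ≃ C × B) :
    T6 B C → T6 B C :=
  eCB45 ⇑R ∘ eBB35 (Prod.swap ∘ RB) ∘ eCC46 (Prod.swap ∘ RC) ∘ eCB45 ⇑R.symm

end Twist


section Untwisting

variable {B C : Type*}

/-- The twist `R₂₃ ∘ R₄₅ ∘ R₂₅`, which conjugates `𝓢₁₂` and `𝓢₂₃` to the product braidings. -/
def twist (R : C × B → C × B) : T6 B C → T6 B C :=
  eCB23 R ∘ eCB45 R ∘ eCB25 R

theorem twist_surjective (R : C × B ≃ C × B) : Function.Surjective (twist (B := B) (C := C) R) := by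
  have h23 : Function.Surjective (eCB23 (B := B) (C := C) R) := fun x =>
    ⟨eCB23 R.symm x, by simp [eCB23]⟩
  have h45 : Function.Surjective (eCB45 (B := B) (C := C) R) := fun x =>
    ⟨eCB45 R.symm x, by simp [eCB45]⟩
  have h25 : Function.Surjective (eCB25 (B := B) (C := C) R) := fun x =>
    ⟨eCB25 R.symm x, by simp [eCB25]⟩
  exact h23.comp (h45.comp h25)

/-- The product of the braidings `P ∘ R^B` and `P ∘ R^C` on the first two copies of `B × C`. -/
def prodBraid12 (RB : B × B → B × B) (RC : C × C → C × C) : T6 B C → T6 B C :=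
  eBB13 (Prod.swap ∘ RB) ∘ eCC24 (Prod.swap ∘ RC)

/-- The product of the braidings `P ∘ R^B` and `P ∘ R^C` on the last two copies of `B × C`. -/
def prodBraid23 (RB : B × B → B × B) (RC : C × C → C × C) : T6 B C → T6 B C :=
  eBB35 (Prod.swap ∘ RB) ∘ eCC46 (Prod.swap ∘ RC)

theorem prodBraid_braid {RB : B × B → B × B} {RC : C × C → C × C} (hB : IsYB RB) (hC : IsYB RC)
    (x : T6 B C) :
    prodBraid12 RB RC (prodBraid23 RB RC (prodBraid12 RB RC x)) =
      prodBraid23 RB RC (prodBraid12 RB RC (prodBraid23 RB RC x)) := by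
  obtain ⟨b1, c2, b3, c4, b5, c6⟩ := x
  have h1 := congrFun hB (b1, b3, b5)
  have h2 := congrFun hC (c2, c4, c6)
  simp only [lift12, lift13, lift23, Function.comp_apply, Prod.mk.injEq, Prod.mk.eta] at h1 h2
  simp only [prodBraid12, prodBraid23, eBB13, eBB35, eCC24, eCC46, Function.comp_apply,
    Prod.fst_swap, Prod.snd_swap, Prod.mk.injEq]
  simp only [h1.1, h2.1, ← h1.2, ← h2.2, and_self]

theorem calS12_twist (RB : B × B → B × B) {RC : C × C → C × C} (R : C × B ≃ C × B)
    (hRC : lift12 (Z := B) RC ∘ lift23 (X := C) ⇑R ∘ lift13 (Y := C) ⇑R =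
      lift13 (Y := C) ⇑R ∘ lift23 (X := C) ⇑R ∘ lift12 (Z := B) RC) (x : T6 B C) :
    calS12 RB RC R (twist R x) = twist R (prodBraid12 RB RC x) := by
  obtain ⟨b1, c2, b3, c4, b5, c6⟩ := x
  have h := congrFun hRC (c2, c4, b5)
  simp only [lift12, lift13, lift23, Function.comp_apply, Prod.mk.injEq, Prod.mk.eta] at h
  simp only [calS12, twist, prodBraid12, eBB13, eCC24, eCB23, eCB45, eCB25, Function.comp_apply,
    Prod.fst_swap, Prod.snd_swap, Prod.mk.eta, Equiv.symm_apply_apply, h]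

theorem calS23_twist {RB : B × B → B × B} (RC : C × C → C × C) (R : C × B ≃ C × B)
    (hRB : lift23 (X := C) RB ∘ lift12 (Z := B) ⇑R ∘ lift13 (Y := B) ⇑R =
      lift13 (Y := B) ⇑R ∘ lift12 (Z := B) ⇑R ∘ lift23 (X := C) RB) (x : T6 B C) :
    calS23 RB RC R (twist R x) = twist R (prodBraid23 RB RC x) := by
  obtain ⟨b1, c2, b3, c4, b5, c6⟩ := x
  have h := congrFun hRB (c2, b3, b5)
  simp only [lift12, lift13, lift23, Function.comp_apply, Prod.mk.injEq, Prod.mk.eta] at h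
  simp only [calS23, twist, prodBraid23, eBB35, eCC46, eCB23, eCB45, eCB25, Function.comp_apply,
    Prod.fst_swap, Prod.snd_swap, Prod.mk.eta, Equiv.symm_apply_apply, h]

end Untwisting

/-- Under the extension hypotheses on `B, C, R^B, R^C, R`, with `R^B` and `R^C`
bijections, the maps `𝓢₁₂ = R₂₃ ∘ S^B₁₃ ∘ S^C₂₄ ∘ R₂₃⁻¹` and
`𝓢₂₃ = R₄₅ ∘ S^B₃₅ ∘ S^C₄₆ ∘ R₄₅⁻¹` satisfy the braid relation
`𝓢₁₂ ∘ 𝓢₂₃ ∘ 𝓢₁₂ = 𝓢₂₃ ∘ 𝓢₁₂ ∘ 𝓢₂₃`; that is, `𝓢` is a set-theoretic solution of the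
braid equation on `B × C`. -/
theorem extension_braid {B C : Type*} (RB : B × B → B × B) (RC : C × C → C × C)
    (hB : IsYB RB) (hC : IsYB RC)
    (hBbij : Function.Bijective RB) (hCbij : Function.Bijective RC)
    (R : C × B ≃ C × B)
    (hRB : lift23 (X := C) RB ∘ lift12 (Z := B) ⇑R ∘ lift13 (Y := B) ⇑R =
      lift13 (Y := B) ⇑R ∘ lift12 (Z := B) ⇑R ∘ lift23 (X := C) RB)
    (hRC : lift12 (Z := B) RC ∘ lift23 (X := C) ⇑R ∘ lift13 (Y := C) ⇑R =
      lift13 (Y := C) ⇑R ∘ lift23 (X := C) ⇑R ∘ lift12 (Z := B) RC) :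
    calS12 RB RC R ∘ calS23 RB RC R ∘ calS12 RB RC R =
      calS23 RB RC R ∘ calS12 RB RC R ∘ calS23 RB RC R := by
  funext y
  obtain ⟨x, rfl⟩ := twist_surjective R y
  simp only [Function.comp_apply, calS12_twist RB R hRC, calS23_twist RC R hRB,
    prodBraid_braid hB hC]
end

section
/- Let G be a group containing elements λ_{ij}, one for each pair 1 ≤ i ≠ j ≤ 6, satisfying the defining relations of the virtual pure braid group VP₆: λ_{ij}λ_{kl} = λ_{kl}λ_{ij} whenever i, j, k, l are pairwise distinct, and λ_{ki}λ_{kj}λ_{ij} = λ_{ij}λ_{kj}λ_{ki} for pairwise distinct i, j, k. Then the elements N₁₂ := λ₁₄λ₁₃λ₂₄λ₃₂⁻¹, N₁₃ := λ₁₆λ₁₅λ₂₆λ₅₂⁻¹, N₂₃ := λ₃₆λ₃₅λ₄₆λ₅₄⁻¹ satisfy the Yang–Baxter relation N₁₂N₁₃N₂₃ = N₂₃N₁₃N₁₂. -/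
/-- A braid-type relation `a * b * c = c * b * a`, usable inside a right-associated product. -/
theorem reverse_three_mul {M : Type*} [Semigroup M] {a b c : M} (h : a * b * c = c * b * a)
    (x : M) : a * (b * (c * x)) = c * (b * (a * x)) := by
  simp only [← mul_assoc, h]

/-- Inverting an outer factor turns a braid-type relation into another one. -/
theorem reverse_three_inv_left {G : Type*} [Group G] {a b c : G} (h : a * b * c = c * b * a) :
    c⁻¹ * a * b = b * a * c⁻¹ := by
  rw [eq_mul_inv_iff_mul_eq, mul_assoc, mul_assoc, inv_mul_eq_iff_eq_mul, ← mul_assoc, h, mul_assoc]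

/-- Inverting the middle factor and an outer one turns a braid-type relation into another one. -/
theorem reverse_three_inv_pair {G : Type*} [Group G] {a b c : G} (h : a * b * c = c * b * a) :
    a * c⁻¹ * b⁻¹ = b⁻¹ * c⁻¹ * a := by
  rw [mul_inv_eq_iff_eq_mul, mul_assoc, mul_assoc, eq_inv_mul_iff_mul_eq, ← mul_assoc, ← mul_assoc,
    ← reverse_three_inv_left h, mul_assoc]

/-- If a group `G` contains elements `λ_{ij}` (`1 ≤ i ≠ j ≤ 6`) satisfying the defining
relations of the virtual pure braid group `VP₆`, then the elements
`N₁₂ := λ₁₄λ₁₃λ₂₄λ₃₂⁻¹`, `N₁₃ := λ₁₆λ₁₅λ₂₆λ₅₂⁻¹`, `N₂₃ := λ₃₆λ₃₅λ₄₆λ₅₄⁻¹` satisfy the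
Yang–Baxter relation `N₁₂N₁₃N₂₃ = N₂₃N₁₃N₁₂`. -/
theorem N_YB {G : Type*} [Group G] (lam : ℕ → ℕ → G)
    (hcomm : ∀ i j k m : ℕ, 1 ≤ i → i ≤ 6 → 1 ≤ j → j ≤ 6 → 1 ≤ k → k ≤ 6 →
      1 ≤ m → m ≤ 6 → i ≠ j → i ≠ k → i ≠ m → j ≠ k → j ≠ m → k ≠ m →
      lam i j * lam k m = lam k m * lam i j)
    (hyb : ∀ i j k : ℕ, 1 ≤ i → i ≤ 6 → 1 ≤ j → j ≤ 6 → 1 ≤ k → k ≤ 6 →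
      i ≠ j → i ≠ k → j ≠ k →
      lam k i * lam k j * lam i j = lam i j * lam k j * lam k i) :
    (lam 1 4 * lam 1 3 * lam 2 4 * (lam 3 2)⁻¹) *
        (lam 1 6 * lam 1 5 * lam 2 6 * (lam 5 2)⁻¹) *
        (lam 3 6 * lam 3 5 * lam 4 6 * (lam 5 4)⁻¹) =
      (lam 3 6 * lam 3 5 * lam 4 6 * (lam 5 4)⁻¹) *
        (lam 1 6 * lam 1 5 * lam 2 6 * (lam 5 2)⁻¹) *
        (lam 1 4 * lam 1 3 * lam 2 4 * (lam 3 2)⁻¹) := by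
  have c (i j k m : ℕ)
      (h : [i, j, k, m].Nodup ∧ ∀ x ∈ [i, j, k, m], 1 ≤ x ∧ x ≤ 6 := by decide) :
      Commute (lam i j) (lam k m) := by
    simp at h
    apply hcomm <;> tauto
  have y (k i j : ℕ) (h : [k, i, j].Nodup ∧ ∀ x ∈ [k, i, j], 1 ≤ x ∧ x ≤ 6 := by decide) :
      lam k i * lam k j * lam i j = lam i j * lam k j * lam k i := by
    simp at h
    apply hyb <;> tauto
  -- `yijk` reverses the three factors involving the strands `i`, `j`, `k`.
  have y236 := reverse_three_mul (reverse_three_inv_left (y 3 2 6).symm)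
  have y136 := reverse_three_mul (y 1 3 6)
  have y235 := reverse_three_mul ((reverse_three_inv_pair (y 3 5 2)).symm)
  have y135 := reverse_three_mul (y 1 3 5)
  have y246 := reverse_three_mul (y 2 4 6)
  have y146 := reverse_three_mul (y 1 4 6)
  have y245 := reverse_three_mul (reverse_three_inv_pair (y 5 2 4).symm)
  have y145 := reverse_three_mul ((reverse_three_inv_left (y 1 5 4)).symm)
  simp only [mul_assoc]
  rw [(c 3 2 1 6).inv_left.left_comm, (c 1 5 2 6).left_comm, (c 5 2 3 6).inv_left.left_comm,
    (c 1 5 3 6).left_comm, y236]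
  rw [(c 2 4 1 6).left_comm, (c 2 4 3 6).left_comm, y136]
  rw [(c 1 4 3 6).left_comm, (c 3 2 1 5).inv_left.left_comm, y235]
  rw [(c 1 3 2 4).left_comm, (c 1 3 2 6).left_comm, y135]
  rw [(c 2 6 3 5).left_comm, (c 2 4 3 5).left_comm, (c 1 6 3 5).left_comm, (c 1 4 3 5).left_comm,
    (c 3 2 4 6).inv_left.left_comm, (c 5 2 4 6).inv_left.left_comm, (c 1 3 4 6).left_comm,
    (c 1 5 4 6).left_comm, y246]
  rw [y146]
  rw [(c 2 4 1 5).left_comm, (c 1 3 5 2).inv_right.left_comm, (c 3 2 5 4).inv_inv.eq,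
    (c 1 3 5 4).inv_right.left_comm, y245]
  rw [(c 1 4 2 6).left_comm, y145]
  rw [(c 2 6 5 4).inv_right.left_comm, (c 1 6 5 4).inv_right.left_comm, (c 2 6 1 5).left_comm,
    (c 1 4 5 2).inv_right.left_comm, (c 2 4 1 3).left_comm]
end

section
/- Let n ≥ 2 and let G be a group containing elements s₁, …, s_{2n−1} satisfying the braid relations sᵢs_{i+1}sᵢ = s_{i+1}sᵢs_{i+1} for 1 ≤ i ≤ 2n−2 and sᵢsⱼ = sⱼsᵢ for |i−j| ≥ 2. Then the doubled elements tᵢ := s_{2i}s_{2i+1}s_{2i−1}s_{2i}, for 1 ≤ i ≤ n−1, again satisfy the braid relations: tᵢt_{i+1}tᵢ = t_{i+1}tᵢt_{i+1} for 1 ≤ i ≤ n−2, and tᵢtⱼ = tⱼtᵢ for |i−j| ≥ 2. Consequently the doubling map Dₙ : Bₙ → B_{2n}, σᵢ ↦ σ_{2i}σ_{2i+1}σ_{2i−1}σ_{2i}, is a group homomorphism of braid groups. -/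
/-- The doubled element `tᵢ = s_{2i} s_{2i+1} s_{2i−1} s_{2i}`. -/
def doubled {G : Type*} [Group G] (s : ℕ → G) (i : ℕ) : G :=
  s (2 * i) * s (2 * i + 1) * s (2 * i - 1) * s (2 * i)

/-- If `a, b, c` are consecutive braid generators, then `b c a b` conjugates `a` to `c`. -/
theorem semiconjBy_doubled_left {M : Type*} [Monoid M] {a b c : M}
    (hab : a * b * a = b * a * b) (hbc : b * c * b = c * b * c) :
    SemiconjBy (b * c * a * b) a c :=
  calc b * c * a * b * a = b * c * (a * b * a) := by simp only [mul_assoc]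
    _ = b * c * b * (a * b) := by rw [hab]; simp only [mul_assoc]
    _ = c * (b * c * a * b) := by rw [hbc]; simp only [mul_assoc]

/-- If `a, b, c, d, e` are consecutive braid generators, then `(b c a b) (d e c d)`
conjugates `b` to `d`. -/
theorem semiconjBy_doubled_mul_doubled_middle {M : Type*} [Monoid M] {a b c d e : M}
    (hbc : b * c * b = c * b * c) (hcd : c * d * c = d * c * d)
    (hac : Commute a c) (had : Commute a d) (hbd : Commute b d) (hbe : Commute b e)
    (hce : Commute c e) :
    SemiconjBy (b * c * a * b * (d * e * c * d)) b d := by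
  have key : b * c * a * b * (d * e * c * d) = b * c * d * (a * e * b * c * d) :=
    calc b * c * a * b * (d * e * c * d) = b * c * a * (b * d) * e * c * d := by
          simp only [mul_assoc]
      _ = b * c * (a * d) * (b * e) * c * d := by rw [hbd.eq]; simp only [mul_assoc]
      _ = b * c * d * (a * e * b * c * d) := by rw [had.eq, hbe.eq]; simp only [mul_assoc]
  rw [key]
  calc b * c * d * (a * e * b * c * d) * b = b * c * d * a * e * b * c * (d * b) := by
        simp only [mul_assoc]
    _ = b * c * d * a * e * (b * c * b) * d := by rw [← hbd.eq]; simp only [mul_assoc]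
    _ = b * c * d * a * (e * c) * b * c * d := by rw [hbc]; simp only [mul_assoc]
    _ = b * c * d * (a * c) * e * b * c * d := by rw [← hce.eq]; simp only [mul_assoc]
    _ = b * (c * d * c) * a * e * b * c * d := by rw [hac.eq]; simp only [mul_assoc]
    _ = b * d * c * d * a * e * b * c * d := by rw [hcd]; simp only [mul_assoc]
    _ = d * (b * c * d * (a * e * b * c * d)) := by rw [hbd.eq]; simp only [mul_assoc]

/-- Doubling five consecutive braid generators yields two elements satisfying the braid
relation. -/
theorem doubled_braid_relation {M : Type*} [Monoid M] {a b c d e : M}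
    (hab : a * b * a = b * a * b) (hbc : b * c * b = c * b * c)
    (hcd : c * d * c = d * c * d) (hde : d * e * d = e * d * e)
    (hac : Commute a c) (had : Commute a d) (hae : Commute a e)
    (hbd : Commute b d) (hbe : Commute b e) (hce : Commute c e) :
    b * c * a * b * (d * e * c * d) * (b * c * a * b) =
      d * e * c * d * (b * c * a * b) * (d * e * c * d) := by
  have hb : SemiconjBy (b * c * a * b * (d * e * c * d)) b d :=
    semiconjBy_doubled_mul_doubled_middle hbc hcd hac had hbd hbe hce
  have ha : SemiconjBy (b * c * a * b * (d * e * c * d)) a c :=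
    (semiconjBy_doubled_left hab hbc).mul_left
      (((had.mul_right hae).mul_right hac).mul_right had).symm
  have hc : SemiconjBy (b * c * a * b * (d * e * c * d)) c e :=
    SemiconjBy.mul_left (((hbe.mul_left hce).mul_left hae).mul_left hbe)
      (semiconjBy_doubled_left hcd hde)
  have h := ((hb.mul_right hc).mul_right ha).mul_right hb
  exact h.eq.trans (mul_assoc _ _ _).symm

/-- An element commuting with `s (2i-1)`, `s (2i)` and `s (2i+1)` commutes with the doubled
element. -/
theorem commute_doubled {G : Type*} [Group G] {s : ℕ → G} {x : G} {i : ℕ}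
    (hpred : Commute x (s (2 * i - 1))) (hmid : Commute x (s (2 * i)))
    (hsucc : Commute x (s (2 * i + 1))) : Commute x (doubled s i) :=
  ((hmid.mul_right hsucc).mul_right hpred).mul_right hmid

/-- If `n ≥ 2` and a group `G` contains elements `s₁, …, s_{2n−1}` satisfying the braid
relations, then the doubled elements `tᵢ = s_{2i}s_{2i+1}s_{2i−1}s_{2i}` (`1 ≤ i ≤ n−1`)
again satisfy the braid relations; consequently the doubling map
`Dₙ : Bₙ → B_{2n}`, `σᵢ ↦ σ_{2i}σ_{2i+1}σ_{2i−1}σ_{2i}`, is a group homomorphism of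
braid groups. -/
theorem doubling_braid {G : Type*} [Group G] (n : ℕ) (hn : 2 ≤ n) (s : ℕ → G)
    (hbr : ∀ i : ℕ, 1 ≤ i → i + 1 ≤ 2 * n - 1 →
      s i * s (i + 1) * s i = s (i + 1) * s i * s (i + 1))
    (hcomm : ∀ i j : ℕ, 1 ≤ i → i ≤ 2 * n - 1 → 1 ≤ j → j ≤ 2 * n - 1 →
      i + 2 ≤ j ∨ j + 2 ≤ i → s i * s j = s j * s i) :
    (∀ i : ℕ, 1 ≤ i → i + 1 ≤ n - 1 →
      doubled s i * doubled s (i + 1) * doubled s i =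
        doubled s (i + 1) * doubled s i * doubled s (i + 1)) ∧
    (∀ i j : ℕ, 1 ≤ i → i ≤ n - 1 → 1 ≤ j → j ≤ n - 1 → i + 2 ≤ j ∨ j + 2 ≤ i →
      doubled s i * doubled s j = doubled s j * doubled s i) := by
  refine ⟨fun i hi hin => ?_, fun i j hi hin hj hjn hij => ?_⟩
  · obtain ⟨k, rfl⟩ : ∃ k, i = k + 1 := ⟨i - 1, by omega⟩
    exact doubled_braid_relation
      (hbr (2 * k + 1) (by omega) (by omega)) (hbr (2 * k + 2) (by omega) (by omega))
      (hbr (2 * k + 3) (by omega) (by omega)) (hbr (2 * k + 4) (by omega) (by omega))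
      (hcomm _ _ (by omega) (by omega) (by omega) (by omega) (by omega))
      (hcomm _ _ (by omega) (by omega) (by omega) (by omega) (by omega))
      (hcomm _ _ (by omega) (by omega) (by omega) (by omega) (by omega))
      (hcomm _ _ (by omega) (by omega) (by omega) (by omega) (by omega))
      (hcomm _ _ (by omega) (by omega) (by omega) (by omega) (by omega))
      (hcomm _ _ (by omega) (by omega) (by omega) (by omega) (by omega))
  · have hs : ∀ k, 2 * i - 1 ≤ k → k ≤ 2 * i + 1 → Commute (s k) (doubled s j) :=
      fun k hk hk' => commute_doubled
        (hcomm _ _ (by omega) (by omega) (by omega) (by omega) (by omega))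
        (hcomm _ _ (by omega) (by omega) (by omega) (by omega) (by omega))
        (hcomm _ _ (by omega) (by omega) (by omega) (by omega) (by omega))
    exact (commute_doubled (hs _ (by omega) (by omega)).symm (hs _ (by omega) (by omega)).symm
      (hs _ (by omega) (by omega)).symm).symm.eq
end

section
/- Let G be a group containing elements λ_{ij}, one for each pair 1 ≤ i < j ≤ 6, satisfying the defining relations of VP₆⁺: λ_{ij}λ_{kl} = λ_{kl}λ_{ij} whenever i, j, k, l are pairwise distinct, and λ_{ij}λ_{ik}λ_{jk} = λ_{jk}λ_{ik}λ_{ij} for i < j < k. Then the elements M₁₂ := λ₁₄λ₁₃λ₂₄λ₂₃, M₁₃ := λ₁₆λ₁₅λ₂₆λ₂₅, M₂₃ := λ₃₆λ₃₅λ₄₆λ₄₅ satisfy the Yang–Baxter relation M₁₂M₁₃M₂₃ = M₂₃M₁₃M₁₂. -/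
/-- Doubling the first strand of a Yang–Baxter relation. -/
theorem yangBaxter_double_first {S : Type*} [Semigroup S] {a₁ a₂ b₁ b₂ c : S}
    (h₁ : a₁ * b₁ * c = c * b₁ * a₁) (h₂ : a₂ * b₂ * c = c * b₂ * a₂)
    (h₂₁ : a₂ * b₁ = b₁ * a₂) (h₁₂ : a₁ * b₂ = b₂ * a₁) :
    (a₁ * a₂) * (b₁ * b₂) * c = c * (b₁ * b₂) * (a₁ * a₂) := by
  calc (a₁ * a₂) * (b₁ * b₂) * c
      = a₁ * (a₂ * b₁) * b₂ * c := by simp only [mul_assoc]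
    _ = a₁ * b₁ * (a₂ * b₂ * c) := by rw [h₂₁]; simp only [mul_assoc]
    _ = (a₁ * b₁ * c) * b₂ * a₂ := by rw [h₂]; simp only [mul_assoc]
    _ = c * b₁ * (a₁ * b₂) * a₂ := by rw [h₁]; simp only [mul_assoc]
    _ = c * (b₁ * b₂) * (a₁ * a₂) := by rw [h₁₂]; simp only [mul_assoc]

/-- Doubling the second strand of a Yang–Baxter relation. -/
theorem yangBaxter_double_second {S : Type*} [Semigroup S] {a₁ a₂ b c₁ c₂ : S}
    (h₁ : a₁ * b * c₂ = c₂ * b * a₁) (h₂ : a₂ * b * c₁ = c₁ * b * a₂)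
    (h₁₁ : a₁ * c₁ = c₁ * a₁) (h₂₂ : a₂ * c₂ = c₂ * a₂) :
    (a₁ * a₂) * b * (c₁ * c₂) = (c₁ * c₂) * b * (a₁ * a₂) := by
  calc (a₁ * a₂) * b * (c₁ * c₂)
      = a₁ * (a₂ * b * c₁) * c₂ := by simp only [mul_assoc]
    _ = (a₁ * c₁) * b * (a₂ * c₂) := by rw [h₂]; simp only [mul_assoc]
    _ = c₁ * (a₁ * b * c₂) * a₂ := by rw [h₁₁, h₂₂]; simp only [mul_assoc]
    _ = (c₁ * c₂) * b * (a₁ * a₂) := by rw [h₁]; simp only [mul_assoc]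

/-- Doubling the third strand of a Yang–Baxter relation. -/
theorem yangBaxter_double_third {S : Type*} [Semigroup S] {a b₁ b₂ c₁ c₂ : S}
    (h₁ : a * b₁ * c₁ = c₁ * b₁ * a) (h₂ : a * b₂ * c₂ = c₂ * b₂ * a)
    (h₂₁ : b₂ * c₁ = c₁ * b₂) (h₁₂ : b₁ * c₂ = c₂ * b₁) :
    a * (b₁ * b₂) * (c₁ * c₂) = (c₁ * c₂) * (b₁ * b₂) * a :=
  (yangBaxter_double_first h₁.symm h₂.symm h₁₂.symm h₂₁.symm).symm

/-- If a group `G` contains elements `λ_{ij}` (`1 ≤ i < j ≤ 6`) satisfying the defining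
relations of `VP₆⁺`, then the elements `M₁₂ := λ₁₄λ₁₃λ₂₄λ₂₃`, `M₁₃ := λ₁₆λ₁₅λ₂₆λ₂₅`,
`M₂₃ := λ₃₆λ₃₅λ₄₆λ₄₅` satisfy the Yang–Baxter relation `M₁₂M₁₃M₂₃ = M₂₃M₁₃M₁₂`. -/
theorem M_YB {G : Type*} [Group G] (lam : ℕ → ℕ → G)
    (hcomm : ∀ i j k m : ℕ, 1 ≤ i → i < j → j ≤ 6 → 1 ≤ k → k < m → m ≤ 6 →
      i ≠ k → i ≠ m → j ≠ k → j ≠ m →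
      lam i j * lam k m = lam k m * lam i j)
    (hyb : ∀ i j k : ℕ, 1 ≤ i → i < j → j < k → k ≤ 6 →
      lam i j * lam i k * lam j k = lam j k * lam i k * lam i j) :
    (lam 1 4 * lam 1 3 * lam 2 4 * lam 2 3) *
        (lam 1 6 * lam 1 5 * lam 2 6 * lam 2 5) *
        (lam 3 6 * lam 3 5 * lam 4 6 * lam 4 5) =
      (lam 3 6 * lam 3 5 * lam 4 6 * lam 4 5) *
        (lam 1 6 * lam 1 5 * lam 2 6 * lam 2 5) *
        (lam 1 4 * lam 1 3 * lam 2 4 * lam 2 3) := by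
  have double_first : ∀ j k, 3 ≤ j → j < k → k ≤ 6 →
      (lam 1 j * lam 2 j) * (lam 1 k * lam 2 k) * lam j k =
        lam j k * (lam 1 k * lam 2 k) * (lam 1 j * lam 2 j) := by
    intro j k hj hjk hk
    apply yangBaxter_double_first
    · apply hyb <;> omega
    · apply hyb <;> omega
    · apply hcomm <;> omega
    · apply hcomm <;> omega
  have pair_comm : ∀ i j k, 3 ≤ i → 3 ≤ j → j < k → k ≤ 6 → i ≤ 6 → i ≠ j → i ≠ k →
      (lam 1 i * lam 2 i) * lam j k = lam j k * (lam 1 i * lam 2 i) := by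
    intro i j k hi hj hjk hk hi' hij hik
    have h₁ : Commute (lam 1 i) (lam j k) := by apply hcomm <;> omega
    have h₂ : Commute (lam 2 i) (lam j k) := by apply hcomm <;> omega
    exact h₁.mul_left h₂
  have double_second : ∀ k, 5 ≤ k → k ≤ 6 →
      ((lam 1 4 * lam 2 4) * (lam 1 3 * lam 2 3)) * (lam 1 k * lam 2 k) *
          (lam 3 k * lam 4 k) =
        (lam 3 k * lam 4 k) * (lam 1 k * lam 2 k) *
          ((lam 1 4 * lam 2 4) * (lam 1 3 * lam 2 3)) := by
    intro k hk hk'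
    apply yangBaxter_double_second
    · apply double_first <;> omega
    · apply double_first <;> omega
    · apply pair_comm <;> omega
    · apply pair_comm <;> omega
  have quad_comm : ∀ i k, 5 ≤ i → i ≤ 6 → 5 ≤ k → k ≤ 6 → i ≠ k →
      (lam 1 i * lam 2 i) * (lam 3 k * lam 4 k) =
        (lam 3 k * lam 4 k) * (lam 1 i * lam 2 i) := by
    intro i k hi hi' hk hk' hik
    have h₃ : Commute (lam 1 i * lam 2 i) (lam 3 k) := by apply pair_comm <;> omega
    have h₄ : Commute (lam 1 i * lam 2 i) (lam 4 k) := by apply pair_comm <;> omega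
    exact h₃.mul_right h₄
  have regroup : ∀ i j k m, 1 ≤ i → i < j → j < k → k < m → m ≤ 6 →
      lam i m * lam i k * lam j m * lam j k =
        (lam i m * lam j m) * (lam i k * lam j k) := by
    intro i j k m hi hij hjk hkm hm
    have h : lam i k * lam j m = lam j m * lam i k := by apply hcomm <;> omega
    rw [mul_assoc (lam i m), h]
    simp only [mul_assoc]
  rw [regroup 1 2 3 4, regroup 1 2 5 6, regroup 3 4 5 6]
  · exact yangBaxter_double_third (double_second 6 (by omega) (by omega))
      (double_second 5 (by omega) (by omega)) (by apply quad_comm <;> omega)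
      (by apply quad_comm <;> omega)
  all_goals omega
end

section
/- Under the extension hypotheses on B, C, R^B, R^C, R, with R^B and R^C bijections, let n ≥ 2 and identify (B × C)ⁿ with the 2n-fold product having B in odd positions 2i−1 and C in even positions 2i (1 ≤ i ≤ n). Assign to each generator of Yₙ a permutation of (B × C)ⁿ as follows: to b_{2i−1,2j−1} the bijection applying R^B to the coordinates in positions (2i−1, 2j−1); to c_{2i,2j} the bijection applying R^C to positions (2i, 2j); to d_{2k,2l−1} the bijection applying R to positions (2k, 2l−1). Then these permutations satisfy all defining relations of Yₙ, so this assignment defines a group homomorphism Yₙ → Sym((B × C)ⁿ). -/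
section Action

variable {B C : Type*} {n : ℕ}

/-- The generator `b_{2i−1,2j−1}` acts on `(B × C)ⁿ` (identified with the `2n`-fold
product with `B` in odd positions `2i−1` and `C` in even positions `2i`) by applying
`R^B` to the `B`-coordinates in positions `(2i−1, 2j−1)`. -/
def actB (RB : B × B → B × B) (i j : Fin n) (f : Fin n → B × C) : Fin n → B × C :=
  Function.update (Function.update f i ((RB ((f i).1, (f j).1)).1, (f i).2)) j
    ((RB ((f i).1, (f j).1)).2, (f j).2)

/-- The generator `c_{2i,2j}` acts by applying `R^C` to the `C`-coordinates in
positions `(2i, 2j)`. -/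
def actC (RC : C × C → C × C) (i j : Fin n) (f : Fin n → B × C) : Fin n → B × C :=
  Function.update (Function.update f i ((f i).1, (RC ((f i).2, (f j).2)).1)) j
    ((f j).1, (RC ((f i).2, (f j).2)).2)

/-- The generator `d_{2k,2l−1}` acts by applying `R : C × B → C × B` to the
coordinates in positions `(2k, 2l−1)`, i.e. to the `C`-coordinate of the `k`-th factor
and the `B`-coordinate of the `l`-th factor. -/
def actD (R : C × B → C × B) (k l : Fin n) (f : Fin n → B × C) : Fin n → B × C :=
  Function.update (Function.update f k ((f k).1, (R ((f k).2, (f l).1)).1)) l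
    ((R ((f k).2, (f l).1)).2, (f l).2)

end Action

section Coordinates

variable {B C : Type*} {n : ℕ}

theorem actB_apply_fst (RB : B × B → B × B) (i j x : Fin n) (f : Fin n → B × C) :
    (actB RB i j f x).1 = if x = j then (RB ((f i).1, (f j).1)).2
      else if x = i then (RB ((f i).1, (f j).1)).1 else (f x).1 := by
  simp only [actB, Function.update_apply]
  split_ifs <;> rfl

theorem actB_apply_snd (RB : B × B → B × B) (i j x : Fin n) (f : Fin n → B × C) :
    (actB RB i j f x).2 = (f x).2 := by
  simp only [actB, Function.update_apply]
  split_ifs <;> simp_all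

theorem actC_apply_fst (RC : C × C → C × C) (i j x : Fin n) (f : Fin n → B × C) :
    (actC RC i j f x).1 = (f x).1 := by
  simp only [actC, Function.update_apply]
  split_ifs <;> simp_all

theorem actC_apply_snd (RC : C × C → C × C) (i j x : Fin n) (f : Fin n → B × C) :
    (actC RC i j f x).2 = if x = j then (RC ((f i).2, (f j).2)).2
      else if x = i then (RC ((f i).2, (f j).2)).1 else (f x).2 := by
  simp only [actC, Function.update_apply]
  split_ifs <;> rfl

theorem actD_apply_fst (R : C × B → C × B) (k l x : Fin n) (f : Fin n → B × C) :
    (actD R k l f x).1 = if x = l then (R ((f k).2, (f l).1)).2 else (f x).1 := by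
  simp only [actD, Function.update_apply]
  split_ifs <;> simp_all

theorem actD_apply_snd (R : C × B → C × B) {k l : Fin n} (hkl : k ≠ l) (x : Fin n)
    (f : Fin n → B × C) :
    (actD R k l f x).2 = if x = k then (R ((f k).2, (f l).1)).1 else (f x).2 := by
  simp only [actD, Function.update_apply]
  split_ifs <;> simp_all

end Coordinates

/-- Under the extension hypotheses on `B, C, R^B, R^C, R`, with `R^B` and `R^C`
bijections and `n ≥ 2`, the permutations of `(B × C)ⁿ` assigned to the generators of
`Yₙ` (namely `b_{2i−1,2j−1} ↦ (R^B)_{2i−1,2j−1}`, `c_{2i,2j} ↦ (R^C)_{2i,2j}`,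
`d_{2k,2l−1} ↦ R_{2k,2l−1}`) satisfy all defining relations of `Yₙ`, hence this
assignment defines a group homomorphism `Yₙ → Sym((B × C)ⁿ)`. -/
theorem yn_representation {B C : Type*} (n : ℕ) (hn : 2 ≤ n)
    (RB : B × B → B × B) (RC : C × C → C × C)
    (hB : IsYB RB) (hC : IsYB RC)
    (hBbij : Function.Bijective RB) (hCbij : Function.Bijective RC)
    (R : C × B ≃ C × B)
    (hRB : lift23 (X := C) RB ∘ lift12 (Z := B) ⇑R ∘ lift13 (Y := B) ⇑R =
      lift13 (Y := B) ⇑R ∘ lift12 (Z := B) ⇑R ∘ lift23 (X := C) RB)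
    (hRC : lift12 (Z := B) RC ∘ lift23 (X := C) ⇑R ∘ lift13 (Y := C) ⇑R =
      lift13 (Y := C) ⇑R ∘ lift23 (X := C) ⇑R ∘ lift12 (Z := B) RC) :
    -- Yang–Baxter relations for the b's
    (∀ i j k : Fin n, i < j → j < k →
      actB (C := C) RB i j ∘ actB RB i k ∘ actB RB j k =
        actB RB j k ∘ actB RB i k ∘ actB RB i j) ∧
    -- Yang–Baxter relations for the c's
    (∀ i j k : Fin n, i < j → j < k →
      actC (B := B) RC i j ∘ actC RC i k ∘ actC RC j k =
        actC RC j k ∘ actC RC i k ∘ actC RC i j) ∧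
    -- commutativity: every b with every c
    (∀ i j k l : Fin n, i < j → k < l →
      actB (C := C) RB i j ∘ actC RC k l = actC RC k l ∘ actB RB i j) ∧
    -- commutativity: b with d, all indices pairwise distinct
    (∀ i j k l : Fin n, i < j → k ≠ l → l ≠ i → l ≠ j →
      actB (C := C) RB i j ∘ actD ⇑R k l = actD ⇑R k l ∘ actB RB i j) ∧
    -- commutativity: c with d, all indices pairwise distinct
    (∀ i j k l : Fin n, i < j → k ≠ l → k ≠ i → k ≠ j →
      actC (B := B) RC i j ∘ actD ⇑R k l = actD ⇑R k l ∘ actC RC i j) ∧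
    -- commutativity: d with d, all indices pairwise distinct
    (∀ i j k l : Fin n, i ≠ j → k ≠ l → i ≠ k → j ≠ l →
      actD (B := B) (C := C) ⇑R i j ∘ actD ⇑R k l = actD ⇑R k l ∘ actD ⇑R i j) ∧
    -- mixed relations with b's
    (∀ i j k : Fin n, i < j → k ≠ i → k ≠ j →
      actB (C := C) RB i j ∘ actD ⇑R k i ∘ actD ⇑R k j =
        actD ⇑R k j ∘ actD ⇑R k i ∘ actB RB i j) ∧
    -- mixed relations with c's
    (∀ i j k : Fin n, i < j → k ≠ i → k ≠ j →
      actC (B := B) RC i j ∘ actD ⇑R j k ∘ actD ⇑R i k =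
        actD ⇑R i k ∘ actD ⇑R j k ∘ actC RC i j) := by
  refine ⟨fun i j k hij hjk => ?_, fun i j k hij hjk => ?_, fun i j k l hij hkl => ?_,
    fun i j k l hij hkl hli hlj => ?_, fun i j k l hij hkl hki hkj => ?_,
    fun i j k l hij hkl hik hjl => ?_, fun i j k hij hki hkj => ?_,
    fun i j k hij hki hkj => ?_⟩ <;> funext f x
  · have h := congrFun hB ((f i).1, (f j).1, (f k).1)
    simp only [lift12, lift13, lift23, Function.comp_apply, Prod.mk.injEq] at h
    have hik := hij.trans hjk
    apply Prod.ext <;> simp only [Function.comp_apply, actB_apply_fst, actB_apply_snd]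
    grind
  · have h := congrFun hC ((f i).2, (f j).2, (f k).2)
    simp only [lift12, lift13, lift23, Function.comp_apply, Prod.mk.injEq] at h
    have hik := hij.trans hjk
    apply Prod.ext <;> simp only [Function.comp_apply, actC_apply_fst, actC_apply_snd]
    grind
  · apply Prod.ext <;> simp only [Function.comp_apply, actB_apply_fst, actB_apply_snd,
      actC_apply_fst, actC_apply_snd]
  · apply Prod.ext <;> simp only [Function.comp_apply, actB_apply_fst, actB_apply_snd,
      actD_apply_fst, actD_apply_snd _ hkl] <;> grind
  · apply Prod.ext <;> simp only [Function.comp_apply, actC_apply_fst, actC_apply_snd,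
      actD_apply_fst, actD_apply_snd _ hkl] <;> grind
  · apply Prod.ext <;> simp only [Function.comp_apply, actD_apply_fst, actD_apply_snd _ hkl,
      actD_apply_snd _ hij] <;> grind
  · have h := congrFun hRB ((f k).2, (f i).1, (f j).1)
    simp only [lift12, lift13, lift23, Function.comp_apply, Prod.mk.injEq] at h
    apply Prod.ext <;> simp only [Function.comp_apply, actB_apply_fst, actB_apply_snd,
      actD_apply_fst, actD_apply_snd _ hki, actD_apply_snd _ hkj] <;> grind
  · have h := congrFun hRC ((f i).2, (f j).2, (f k).1)
    simp only [lift12, lift13, lift23, Function.comp_apply, Prod.mk.injEq] at h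
    apply Prod.ext <;> simp only [Function.comp_apply, actC_apply_fst, actC_apply_snd,
      actD_apply_fst, actD_apply_snd _ hki.symm, actD_apply_snd _ hkj.symm] <;> grind
end
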